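/- Let k ≥ 2 and m ≥ 1 be integers. For all τ = u+iv ∈ ℍ one has R_{2−2k}^{k−1}( Γ(2k−1, 4πmv)·e^{−2πimτ} ) = (2k−2)! · conj( R_{2−2k}^{k−1}( e^{2πimτ} ) ), where both sides are viewed as smooth functions of τ ∈ ℍ and the iterated raising operator is applied in τ. -/

import Mathlib

open Complex MeasureTheory
open scoped Real

noncomputable section

namespace LHMF

abbrev SL2Z := Matrix.SpecialLinearGroup (Fin 2) ℤ

/-- Möbius action of `SL₂(ℤ)` on `ℂ`. -/
def moeb (M : SL2Z) (τ : ℂ) : ℂ :=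
  ((M.1 0 0 : ℂ) * τ + (M.1 0 1 : ℂ)) / ((M.1 1 0 : ℂ) * τ + (M.1 1 1 : ℂ))

/-- Automorphy factor `j(M,τ) = cτ + d`. -/
def jfac (M : SL2Z) (τ : ℂ) : ℂ := (M.1 1 0 : ℂ) * τ + (M.1 1 1 : ℂ)

/-- `E₁`: union of all `SL₂(ℤ)`-translates of the positive imaginary axis. -/
def E1 : Set ℂ := ⋃ M : SL2Z, (fun y : ℝ => moeb M ((y : ℂ) * Complex.I)) '' Set.Ioi 0

/-- Wirtinger derivative `∂f/∂τ`. -/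
def dtau (f : ℂ → ℂ) (τ : ℂ) : ℂ :=
  (fderiv ℝ f τ 1 - Complex.I * fderiv ℝ f τ Complex.I) / 2

/-- Wirtinger derivative `∂f/∂τ̄`. -/
def dtaubar (f : ℂ → ℂ) (τ : ℂ) : ℂ :=
  (fderiv ℝ f τ 1 + Complex.I * fderiv ℝ f τ Complex.I) / 2

/-- The operator `ξ_κ f = 2i v^κ conj(∂f/∂τ̄)`. -/
def xiOp (κ : ℤ) (f : ℂ → ℂ) (τ : ℂ) : ℂ :=
  2 * Complex.I * ((τ.im : ℂ) ^ κ) * starRingEnd ℂ (dtaubar f τ)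

/-- The operator `𝒟 = (1/(2πi)) ∂/∂τ`. -/
def Dop (f : ℂ → ℂ) : ℂ → ℂ := fun τ => (2 * (π : ℂ) * Complex.I)⁻¹ * dtau f τ

/-- Maass raising operator of weight `κ`. -/
def raiseOp (κ : ℤ) (f : ℂ → ℂ) (τ : ℂ) : ℂ :=
  2 * Complex.I * dtau f τ + (κ : ℂ) * (τ.im : ℂ)⁻¹ * f τ

/-- Iterated raising operator `R_κ^m = R_{κ+2m-2} ∘ ⋯ ∘ R_{κ+2} ∘ R_κ`. -/
def raiseIter (κ : ℤ) : ℕ → (ℂ → ℂ) → (ℂ → ℂ)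
  | 0 => fun f => f
  | m + 1 => fun f => raiseOp (κ + 2 * m) (raiseIter κ m f)

/-- Petersson's Poincaré series `H_{k,k-1}(z,τ)`. -/
def Hpet (k : ℕ) (z τ : ℂ) : ℂ :=
  ∑' M : SL2Z, jfac M τ ^ (2 * k - 2) * ((moeb M τ).im : ℂ) ^ (2 * k - 1) *
    (z - moeb M τ)⁻¹ * (z - starRingEnd ℂ (moeb M τ)) ^ (1 - 2 * (k : ℤ))

/-- The locally harmonic Maass form `H_{1-k,n}`. -/
def Hlhmf (k n : ℕ) (τ : ℂ) : ℂ :=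
  (2 * Complex.I) ^ (2 * k - 2) / (2 * (π : ℂ)) *
    ∫ y in Set.Ioi (0 : ℝ), Hpet k ((y : ℂ) * Complex.I) τ * (y : ℂ) ^ n

/-- The cusp form `R_n` of weight `2k`. -/
def Rnform (k n : ℕ) (τ : ℂ) : ℂ :=
  (2 : ℂ) ^ (2 * k - 3) / (Complex.I ^ (2 * k - 1 - n) * (Nat.choose (2 * k - 2) n : ℂ) * (π : ℂ)) *
    ∑' M : SL2Z, jfac M τ ^ (-2 * (k : ℤ)) * moeb M τ ^ (-(n : ℤ) - 1)

/-- Holomorphic Eichler integral of `f` (weight `2k`), along a vertical path. -/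
def eichlerHol (k : ℕ) (f : ℂ → ℂ) (τ : ℂ) : ℂ :=
  (-2 * (π : ℂ) * Complex.I) ^ (2 * k - 1) / (Nat.factorial (2 * k - 2) : ℂ) *
    ∫ t in Set.Ioi (0 : ℝ), f (τ + (t : ℂ) * Complex.I) * ((t : ℂ) * Complex.I) ^ (2 * k - 2) *
      Complex.I

/-- Non-holomorphic Eichler integral `f^*` of `f` (weight `2k`), along a vertical path. -/
def eichlerStar (k : ℕ) (f : ℂ → ℂ) (τ : ℂ) : ℂ :=
  (-2 * Complex.I) ^ (1 - 2 * (k : ℤ)) *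
    ∫ t in Set.Ioi (0 : ℝ),
      starRingEnd ℂ (f (-(starRingEnd ℂ (-(starRingEnd ℂ τ) + (t : ℂ) * Complex.I)))) *
        (-(starRingEnd ℂ τ) + (t : ℂ) * Complex.I + τ) ^ (2 * k - 2) * Complex.I

/-- Bernoulli polynomial evaluated at a complex number. -/
def bernC (m : ℕ) (τ : ℂ) : ℂ := Polynomial.aeval τ (Polynomial.bernoulli m)

/-- Periodized Bernoulli polynomial `𝔹_m(τ) = B_m(τ - ⌊Re τ⌋)`. -/
def bernPer (m : ℕ) (τ : ℂ) : ℂ := bernC m (τ - (⌊τ.re⌋ : ℂ))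

/-- The period `r_n(E_{2k})` of the Eisenstein series, for `0 < n < 2k-2`. -/
def rnE (k n : ℕ) : ℚ :=
  if n % 2 = 0 then 0
  else (-1) ^ ((n - 1) / 2) * (2 * (k : ℚ)) * bernoulli (n + 1) * bernoulli (2 * k - 1 - n) /
    (bernoulli (2 * k) * ((n : ℚ) + 1) * ((2 * k - 1 - n : ℕ) : ℚ))

/-- The local polynomial `P_{1-k,n}`. -/
def Ppoly (k n : ℕ) (τ : ℂ) : ℂ :=
  (rnE k n : ℂ)
  + (-Complex.I) ^ (n + 1) / ((n : ℂ) + 1) * bernPer (n + 1) τ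
  + Complex.I ^ (n + 1) / ((2 * k - 1 - n : ℕ) : ℂ) * bernPer (2 * k - 1 - n) τ
  + Complex.I ^ (1 - (n : ℤ)) / 2 *
      ∑' M : {M : SL2Z // 0 < M.1 0 0 * M.1 1 0 ∧ (moeb M τ).re < 0},
        jfac M.1 τ ^ (2 * k - 2) *
          (moeb M.1 τ ^ n - (-1 : ℂ) ^ n * moeb M.1 τ ^ (2 * k - 2 - n))

/-- The binary quadratic form `[a,b,c]` evaluated at complex arguments. -/
def qfC (a b c : ℤ) (x y : ℂ) : ℂ := (a : ℂ) * x ^ 2 + (b : ℂ) * x * y + (c : ℂ) * y ^ 2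

/-- CM point of the positive definite form `[a,b,c]`. -/
def cmPoint (a b c : ℤ) : ℂ :=
  (-(b : ℂ) + Complex.I * ((Real.sqrt (((b ^ 2 - 4 * a * c).natAbs : ℝ))) : ℂ)) / (2 * (a : ℂ))

/-- The form `[a,b,c] ∘ M`. -/
def qfComp (a b c : ℤ) (M : SL2Z) : ℤ × ℤ × ℤ :=
  (a * (M.1 0 0) ^ 2 + b * (M.1 0 0) * (M.1 1 0) + c * (M.1 1 0) ^ 2,
   2 * a * (M.1 0 0) * (M.1 0 1) + b * ((M.1 0 0) * (M.1 1 1) + (M.1 0 1) * (M.1 1 0)) +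
     2 * c * (M.1 1 0) * (M.1 1 1),
   a * (M.1 0 1) ^ 2 + b * (M.1 0 1) * (M.1 1 1) + c * (M.1 1 1) ^ 2)

/-- `w_P`: order of the stabilizer of `P = [a,b,c]` in `PSL₂(ℤ)` (half the order of the
stabilizer in `SL₂(ℤ)`, which contains `±1`). -/
def wP (a b c : ℤ) : ℕ := Nat.card {M : SL2Z // qfComp a b c M = (a, b, c)} / 2

/-- The meromorphic modular form `f_{k,P}` for `P = [a,b,c]`. -/
def fkP (k : ℕ) (a b c : ℤ) (z : ℂ) : ℂ :=
  (((((b ^ 2 - 4 * a * c).natAbs : ℝ)) ^ ((k : ℝ) - 1 / 2) : ℝ) : ℂ) /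
      (2 * (π : ℂ) * (wP a b c : ℂ)) *
    ∑' M : SL2Z, (qfC a b c ((M.1 0 0 : ℂ) * z + (M.1 0 1 : ℂ))
      ((M.1 1 0 : ℂ) * z + (M.1 1 1 : ℂ))) ^ (-(k : ℤ))

/-- The `n`-th period `r_n(f) = ∫₀^∞ f(iy) y^n dy`. -/
def periodN (n : ℕ) (f : ℂ → ℂ) : ℂ :=
  ∫ y in Set.Ioi (0 : ℝ), f ((y : ℂ) * Complex.I) * (y : ℂ) ^ n

/-- Epstein zeta function of `[a,b,c]` at an integer `k`. -/
def epstein (a b c : ℤ) (k : ℕ) : ℝ :=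
  ∑' p : {p : ℤ × ℤ // p ≠ (0, 0)},
    ((a * p.1.1 ^ 2 + b * p.1.1 * p.1.2 + c * p.1.2 ^ 2 : ℤ) : ℝ) ^ (-(k : ℤ))

/-- `sgn(M)` for `M = (a,b;c,d)`: `sgn(ac)` if `ac ≠ 0`, else `sgn(bd)`. -/
def sgnM (M : SL2Z) : ℤ :=
  if M.1 0 0 * M.1 1 0 ≠ 0 then Int.sign (M.1 0 0 * M.1 1 0) else Int.sign (M.1 0 1 * M.1 1 1)

/-- Upper incomplete Gamma function `Γ(s,x)` for a natural number `s`. -/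
def GammaUpper (s : ℕ) (x : ℝ) : ℝ := ∫ t in Set.Ioi x, Real.exp (-t) * t ^ (s - 1)

/-- A cusp form of weight `2k` for `SL₂(ℤ)`, as a function on `ℂ` (holomorphic on `ℍ`,
modular of weight `2k`, vanishing at the cusp `i∞`). -/
def IsCuspForm2k (k : ℕ) (f : ℂ → ℂ) : Prop :=
  (∀ τ : ℂ, 0 < τ.im → DifferentiableAt ℂ f τ) ∧
  (∀ (M : SL2Z) (τ : ℂ), 0 < τ.im → f (moeb M τ) = jfac M τ ^ (2 * k) * f τ) ∧
  Filter.Tendsto f (Filter.comap Complex.im Filter.atTop) (nhds 0)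

/-- The polynomial recursion behind the iterated raising operator. -/
def PP (κ d : ℝ) (P : Polynomial ℝ) : ℕ → Polynomial ℝ
  | 0 => P
  | n + 1 => Polynomial.X * Polynomial.derivative (PP κ d P n) +
      Polynomial.C (κ + n) * PP κ d P n + Polynomial.C d * (Polynomial.X * PP κ d P n)

lemma PP_coeff_succ_succ (κ d : ℝ) (P : Polynomial ℝ) (n a : ℕ) :
    (PP κ d P (n + 1)).coeff (a + 1) =
      (κ + n + (a + 1 : ℕ)) * (PP κ d P n).coeff (a + 1) + d * (PP κ d P n).coeff a := by
  simp only [PP, Polynomial.coeff_add, Polynomial.coeff_X_mul, Polynomial.coeff_C_mul,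
    Polynomial.coeff_derivative]
  push_cast
  ring

lemma PP_coeff_succ_zero (κ d : ℝ) (P : Polynomial ℝ) (n : ℕ) :
    (PP κ d P (n + 1)).coeff 0 = (κ + n) * (PP κ d P n).coeff 0 := by
  simp [PP, Polynomial.mul_coeff_zero]

lemma PP_zero_coeff (κ : ℝ) (P : Polynomial ℝ) (n a : ℕ) :
    (PP κ 0 P n).coeff a = (∏ i ∈ Finset.range n, (κ + a + i)) * P.coeff a := by
  induction n with
  | zero => simp [PP]
  | succ n ih =>
    rw [Finset.prod_range_succ]
    cases a with
    | zero => rw [PP_coeff_succ_zero, ih]; push_cast; ring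
    | succ a => rw [PP_coeff_succ_succ, ih]; push_cast; ring

lemma PP_one_coeff (κ d : ℝ) (n : ℕ) : ∀ a : ℕ,
    (PP κ d 1 n).coeff a =
      (n.choose a : ℝ) * (∏ i ∈ Finset.range (n - a), (κ + a + i)) * d ^ a := by
  induction n with
  | zero =>
    intro a
    cases a with
    | zero => simp [PP]
    | succ a => simp [PP, Polynomial.coeff_one]
  | succ n ih =>
    intro a
    cases a with
    | zero =>
      rw [PP_coeff_succ_zero, ih]
      simp [Finset.prod_range_succ]
      ring
    | succ a =>
      rw [PP_coeff_succ_succ, ih, ih]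
      rcases lt_trichotomy n a with h | h | h
      · rw [Nat.choose_eq_zero_of_lt h, Nat.choose_eq_zero_of_lt (by omega : n < a + 1),
          Nat.choose_eq_zero_of_lt (by omega : n + 1 < a + 1)]
        simp
      · subst h
        simp
        ring
      · obtain ⟨b, rfl⟩ : ∃ b, n = a + 1 + b := ⟨n - a - 1, by omega⟩
        have e1 : a + 1 + b - (a + 1) = b := by omega
        have e2 : a + 1 + b - a = b + 1 := by omega
        have e3 : a + 1 + b + 1 - (a + 1) = b + 1 := by omega
        rw [e1, e2, e3, Finset.prod_range_succ (fun i : ℕ => κ + ((a + 1 : ℕ) : ℝ) + (i : ℝ)) b,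
          Finset.prod_range_succ' (fun i : ℕ => κ + (a : ℝ) + (i : ℝ)) b]
        have e4 : (∏ i ∈ Finset.range b, (κ + (a : ℝ) + ((i + 1 : ℕ) : ℝ))) =
            ∏ i ∈ Finset.range b, (κ + ((a + 1 : ℕ) : ℝ) + (i : ℝ)) := by
          refine Finset.prod_congr rfl fun i _ => ?_
          push_cast; ring
        rw [e4, Nat.choose_succ_succ']
        have hc : ((a + 1 + b).choose (a + 1) : ℝ) * (a + 1) = ((a + 1 + b).choose a : ℝ) * (b + 1) := by
          have := Nat.choose_succ_right_eq (a + 1 + b) a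
          rw [e2] at this
          exact_mod_cast this
        generalize (∏ i ∈ Finset.range b, (κ + ((a + 1 : ℕ) : ℝ) + (i : ℝ))) = p
        push_cast
        linear_combination p * d ^ (a + 1) * hc

lemma prod_neg_range (n a : ℕ) (h : a ≤ n) :
    (∏ i ∈ Finset.range a, (-(n : ℝ) + i)) = (-1) ^ a * (a.factorial * n.choose a : ℝ) := by
  have h1 : ((n.descFactorial a : ℕ) : ℝ) = ∏ i ∈ Finset.range a, ((n : ℝ) - i) := by
    rw [Nat.descFactorial_eq_prod_range]
    push_cast
    refine Finset.prod_congr rfl fun i hi => ?_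
    have := Finset.mem_range.1 hi
    rw [Nat.cast_sub (by omega)]
  have h2 : ((n.descFactorial a : ℕ) : ℝ) = a.factorial * n.choose a := by
    rw [Nat.descFactorial_eq_factorial_mul_choose]; push_cast; ring
  rw [← h2, h1]
  have : ∀ i ∈ Finset.range a, (-(n : ℝ) + i) = (-1) * ((n : ℝ) - i) := fun i _ => by ring
  rw [Finset.prod_congr rfl this, Finset.prod_mul_distrib]
  simp

/-- Truncated exponential polynomial `N! ∑_{a ≤ N} (cX)^a / a!`. -/
def TP (N : ℕ) (c : ℝ) : Polynomial ℝ :=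
  ∑ a ∈ Finset.range (N + 1), Polynomial.monomial a (N.factorial * (c ^ a / a.factorial) : ℝ)

lemma TP_coeff (N : ℕ) (c : ℝ) (a : ℕ) :
    (TP N c).coeff a = if a ≤ N then (N.factorial * (c ^ a / a.factorial) : ℝ) else 0 := by
  simp [TP, Polynomial.coeff_monomial, Finset.sum_ite_eq']

lemma TP_eval (N : ℕ) (c x : ℝ) :
    (TP N c).eval x = (TP N 1).eval (c * x) := by
  simp only [TP, Polynomial.eval_finsetSum, Polynomial.eval_monomial]
  refine Finset.sum_congr rfl fun i _ => ?_
  rw [mul_pow]; ring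

lemma PP_eq (n : ℕ) (c : ℝ) :
    PP (-(2 * n : ℕ)) 0 (TP (2 * n) c) n =
      Polynomial.C ((2 * n).factorial : ℝ) * PP (-(2 * n : ℕ)) (-c) 1 n := by
  ext a
  rw [Polynomial.coeff_C_mul, PP_zero_coeff, PP_one_coeff, TP_coeff]
  by_cases h1 : a ≤ n
  · rw [if_pos (by omega)]
    obtain ⟨b, rfl⟩ : ∃ b, n = b + a := ⟨n - a, by omega⟩
    rw [Finset.prod_range_add]
    have e : (∏ x ∈ Finset.range a, (-((2 * (b + a) : ℕ) : ℝ) + (a : ℝ) + ((b + x : ℕ) : ℝ))) =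
        ∏ x ∈ Finset.range a, (-((b + a : ℕ) : ℝ) + x) := by
      refine Finset.prod_congr rfl fun i _ => ?_
      push_cast; ring
    rw [e, prod_neg_range _ _ h1, Nat.add_sub_cancel]
    have : (a.factorial : ℝ) ≠ 0 := by positivity
    rw [neg_pow c]
    field_simp
  · rw [Nat.choose_eq_zero_of_lt (by omega)]
    simp only [Nat.cast_zero, zero_mul, mul_zero]
    split_ifs with h2
    · rw [Finset.prod_eq_zero (i := 2 * n - a) (Finset.mem_range.2 (by omega))
        (by rw [Nat.cast_sub h2]; ring), zero_mul]
    · simp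

lemma TP_deriv (N : ℕ) (x : ℝ) :
    (TP N 1).eval x - (Polynomial.derivative (TP N 1)).eval x = x ^ N := by
  have h : TP N 1 - Polynomial.derivative (TP N 1) = Polynomial.X ^ N := by
    ext a
    rw [Polynomial.coeff_sub, Polynomial.coeff_derivative, TP_coeff, TP_coeff,
      Polynomial.coeff_X_pow, Nat.factorial_succ]
    have : (a.factorial : ℝ) ≠ 0 := by positivity
    have : (N.factorial : ℝ) ≠ 0 := by positivity
    rcases lt_trichotomy a N with h | h | h
    · rw [if_pos h.le, if_pos (by omega), if_neg (by omega)]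
      push_cast; field_simp; simp
    · subst h; simp; field_simp
    · rw [if_neg (by omega), if_neg (by omega), if_neg (by omega)]; simp
  rw [← Polynomial.eval_sub, h]; simp

lemma TP_tendsto (P : Polynomial ℝ) :
    Filter.Tendsto (fun x : ℝ => -(Real.exp (-x) * P.eval x)) Filter.atTop (nhds 0) := by
  have := (Polynomial.tendsto_div_exp_atTop P).neg
  simpa [Real.exp_neg, div_eq_inv_mul] using this

lemma GammaUpper_eq (N : ℕ) (x : ℝ) (hx : 0 ≤ x) :
    GammaUpper (N + 1) x = Real.exp (-x) * (TP N 1).eval x := by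
  have hd : ∀ y : ℝ, HasDerivAt (fun x : ℝ => -(Real.exp (-x) * (TP N 1).eval x))
      (Real.exp (-y) * y ^ N) y := by
    intro y
    have h1 : HasDerivAt (fun x : ℝ => Real.exp (-x)) (Real.exp (-y) * (-1)) y :=
      (hasDerivAt_neg y).exp
    refine (h1.fun_mul ((TP N 1).hasDerivAt y)).fun_neg.congr_deriv ?_
    rw [← TP_deriv]; ring
  have := integral_Ioi_of_hasDerivAt_of_nonneg' (a := x) (fun y _ => hd y)
    (fun y hy => by have : 0 < y := lt_of_le_of_lt hx hy
                    positivity) (TP_tendsto _)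
  rw [GammaUpper, Nat.add_sub_cancel, this]
  ring

lemma dtau_congr {f g : ℂ → ℂ} {τ : ℂ} (hτ : 0 < τ.im)
    (h : ∀ w : ℂ, 0 < w.im → f w = g w) : dtau f τ = dtau g τ := by
  have : f =ᶠ[nhds τ] g := by
    filter_upwards [(isOpen_lt continuous_const Complex.continuous_im).mem_nhds hτ] with w hw
    exact h w hw
  rw [dtau, dtau, this.fderiv_eq]

lemma dtau_im_mul {g : ℝ → ℝ} {g' : ℝ} {h : ℂ → ℂ} {τ : ℂ} (hg : HasDerivAt g g' τ.im)
    (hh : DifferentiableAt ℝ h τ) :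
    2 * Complex.I * dtau (fun w => (g w.im : ℂ) * h w) τ =
      g' * h τ + g τ.im * (2 * Complex.I * dtau h τ) := by
  have h0 : HasFDerivAt (fun w : ℂ => w.im) Complex.imCLM τ := Complex.imCLM.hasFDerivAt
  have h1 := hg.comp_hasFDerivAt τ h0
  have h2 := (Complex.ofRealCLM.hasFDerivAt (x := g τ.im)).comp τ h1
  have h3 := h2.mul hh.hasFDerivAt
  have h4 : HasFDerivAt (fun w => (g w.im : ℂ) * h w) _ τ := h3
  rw [dtau, h4.fderiv, dtau]
  simp
  ring_nf
  simp

lemma raiseIter_PP (κ : ℤ) (d : ℝ) (P : Polynomial ℝ) (h f : ℂ → ℂ) (hh : Differentiable ℝ h)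
    (hd : ∀ w, 2 * Complex.I * dtau h w = d * h w)
    (hf : ∀ w : ℂ, 0 < w.im → f w = ((P.eval w.im : ℝ) : ℂ) * h w) (n : ℕ) :
    ∀ τ : ℂ, 0 < τ.im → raiseIter κ n f τ =
      (((τ.im ^ n)⁻¹ * (PP κ d P n).eval τ.im : ℝ) : ℂ) * h τ := by
  induction n with
  | zero => intro τ hτ; simp [raiseIter, PP, hf τ hτ]
  | succ n ih =>
    intro τ hτ
    have hne : τ.im ≠ 0 := hτ.ne'
    have hg : HasDerivAt (fun v : ℝ => (v ^ n)⁻¹ * (PP κ d P n).eval v) _ τ.im :=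
      ((hasDerivAt_pow n τ.im).fun_inv (pow_ne_zero n hne)).fun_mul
        ((PP κ d P n).hasDerivAt τ.im)
    simp only [raiseIter, raiseOp]
    rw [dtau_congr hτ ih, dtau_im_mul hg (hh τ), hd, ih τ hτ]
    have key : ∀ A B C D: ℝ, A + B * d + (κ + 2 * n) * τ.im⁻¹ * C = D → 
        (A : ℂ) * h τ + B * (d * h τ) + ((κ + 2 * n : ℤ) : ℂ) * (τ.im : ℂ)⁻¹ * (C * h τ) = D * h τ := by
      intro A B C D hD
      rw [← hD]; push_cast; ring
    apply key
    simp only [PP, Polynomial.eval_add, Polynomial.eval_mul, Polynomial.eval_X, Polynomial.eval_C]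
    cases n with
    | zero => simp; field_simp; ring
    | succ n =>
      simp only [Nat.add_sub_cancel]
      push_cast
      field_simp
      ring

lemma dtau_exp (c : ℂ) (w : ℂ) :
    dtau (fun w => Complex.exp (c * w)) w = c * Complex.exp (c * w) := by
  have h1 : HasDerivAt (fun w => Complex.exp (c * w)) (Complex.exp (c * w) * (c * 1)) w :=
    ((hasDerivAt_id w).const_mul c).cexp
  have h2 := h1.hasFDerivAt.restrictScalars ℝ
  rw [dtau, h2.fderiv]
  simp
  ring_nf
  simp
  ring

lemma dtau_exp_conj (c : ℂ) (w : ℂ) :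
    dtau (fun w => Complex.exp (c * starRingEnd ℂ w)) w = 0 := by
  have h1 : HasDerivAt (fun w => Complex.exp (c * w)) 
    (Complex.exp (c * starRingEnd ℂ w) * (c * 1)) (starRingEnd ℂ w) :=
    ((hasDerivAt_id _).const_mul c).cexp
  have h2 := h1.hasFDerivAt.restrictScalars ℝ
  have h3 : HasFDerivAt (fun w => Complex.exp (c * starRingEnd ℂ w)) _ w :=
    h2.comp w (Complex.conjCLE.toContinuousLinearMap.hasFDerivAt (x := w))
  rw [dtau, h3.fderiv]
  simp
  ring_nf
  simp

/-- the raising identity for incomplete-Gamma Whittaker terms. -/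
theorem raised_gamma_whittaker (k m : ℕ) (hk : 2 ≤ k) (hm : 1 ≤ m) (τ : ℂ) (hτ : 0 < τ.im) :
    raiseIter (2 - 2 * k) (k - 1)
        (fun w => (GammaUpper (2 * k - 1) (4 * π * m * w.im) : ℂ) *
          Complex.exp (-(2 * (π : ℂ) * Complex.I * (m : ℂ) * w))) τ =
      (Nat.factorial (2 * k - 2) : ℂ) *
        starRingEnd ℂ
          (raiseIter (2 - 2 * k) (k - 1)
            (fun w => Complex.exp (2 * (π : ℂ) * Complex.I * (m : ℂ) * w)) τ) := by
  obtain ⟨n, rfl⟩ : ∃ n, k = n + 1 := ⟨k - 1, by omega⟩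
  have e1 : n + 1 - 1 = n := by omega
  have e2 : 2 * (n + 1) - 1 = 2 * n + 1 := by omega
  have e3 : 2 * (n + 1) - 2 = 2 * n := by omega
  have hκ : ((2 - 2 * ((n + 1 : ℕ) : ℤ) : ℤ) : ℝ) = -(2 * n : ℕ) := by push_cast; ring
  rw [e1, e2, e3]
  have hdiff : Differentiable ℝ
      (fun w : ℂ => Complex.exp (-(2 * (π : ℂ) * Complex.I * m) * starRingEnd ℂ w)) := by
    have h1 : Differentiable ℝ (fun w : ℂ => starRingEnd ℂ w) := Complex.conjCLE.differentiable
    exact (h1.const_mul _).cexp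
  rw [raiseIter_PP (2 - 2 * ((n + 1 : ℕ) : ℤ)) 0 (TP (2 * n) (4 * π * m))
    (fun w => Complex.exp (-(2 * (π : ℂ) * Complex.I * m) * starRingEnd ℂ w)) _ hdiff
    (fun w => by rw [dtau_exp_conj]; simp) ?_ n τ hτ,
    raiseIter_PP (2 - 2 * ((n + 1 : ℕ) : ℤ)) (-(4 * π * m)) 1
    (fun w => Complex.exp (2 * (π : ℂ) * Complex.I * m * w)) _ ?_ ?_ ?_ n τ hτ, hκ, PP_eq]
  · rw [map_mul, Complex.conj_ofReal, ← Complex.exp_conj]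
    simp only [map_mul, Complex.conj_ofReal, Complex.conj_I, map_ofNat, map_natCast,
      Polynomial.eval_mul, Polynomial.eval_natCast, Complex.ofReal_mul, Complex.ofReal_natCast]
    ring_nf
  · exact (differentiable_id.const_mul _).cexp
  · intro w
    rw [dtau_exp]
    push_cast
    linear_combination (4 * π * m * Complex.exp (2 * (π : ℂ) * Complex.I * m * w)) * Complex.I_mul_I
  · intro w _; simp
  · intro w hw
    rw [GammaUpper_eq _ _ (by positivity), TP_eval (2 * n) (4 * π * m)]
    push_cast
    have hw2 : starRingEnd ℂ w = w - 2 * Complex.I * w.im := by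
      apply Complex.ext <;> simp; ring
    have : Complex.exp (-(2 * (π : ℂ) * Complex.I * m) * starRingEnd ℂ w) =
        Complex.exp (-(4 * π * m * w.im)) * Complex.exp (-(2 * (π : ℂ) * Complex.I * m * w)) := by
      rw [← Complex.exp_add, hw2]
      congr 1
      linear_combination (4 * π * m * w.im : ℂ) * Complex.I_mul_I
    rw [this]
    ring

end LHMF
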